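/- arXiv:2106.12650 — 5 statements merged into one kernel-verified Lean document; each statement's English description precedes it below -/
import Mathlib

section
/- Let n ≥ 1, d > 0, and let Ω ⊆ EuclideanSpace ℝ (Fin n) be a bounded open set contained in the slab {x : |xₙ| < d/2}, where xₙ denotes the last coordinate. Let u : EuclideanSpace ℝ (Fin n) → ℝ be continuous on the closure of Ω, twice continuously differentiable on Ω, and equal to 0 at every point of the frontier of Ω. Suppose H ≥ 0 and |Δu(x)| ≤ H for all x ∈ Ω. Then |u(x)| ≤ (d²/8)·H for all x ∈ Ω. -/
/-!
The proof is the maximum principle with a quadratic barrier in the last coordinate. For `K > H`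
put `v x = u x + K / 2 * (x p) ^ 2`, where `p` is the last index. At an interior maximum of `v`
all pure second derivatives of `v` are nonpositive, so `Δu + K ≤ 0`, contradicting `-H ≤ Δu`.
Hence the maximum of `v` over the compact set `closure Ω` is attained on the frontier, where
`u = 0` and `|x p| ≤ d / 2`; this gives `u ≤ v ≤ K * d ^ 2 / 8`. Letting `K ↓ H` yields the upper
bound (`le_of_lap_lower_bound`), and applying it to `-u` yields the lower one.
-/

open MeasureTheory

noncomputable def lap {n : ℕ} (u : EuclideanSpace ℝ (Fin n) → ℝ)
    (x : EuclideanSpace ℝ (Fin n)) : ℝ :=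
  ∑ i, iteratedFDeriv ℝ 2 u x ![EuclideanSpace.single i 1, EuclideanSpace.single i 1]

open Filter Topology

/-- Necessary second-order condition at a local maximum: here `ψ` is the derivative of `φ` and `a` its
second derivative at `t₀`. -/
lemma second_deriv_nonpos_of_isLocalMax {φ ψ : ℝ → ℝ} {t₀ a : ℝ} (hmax : IsLocalMax φ t₀)
    (hφ : ∀ᶠ t in 𝓝 t₀, HasDerivAt φ (ψ t) t) (hψ : HasDerivAt ψ a t₀) : a ≤ 0 := by
  by_contra! ha
  have hev : deriv φ =ᶠ[𝓝 t₀] ψ := hφ.mono fun t ht => ht.deriv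
  have hdd : deriv (deriv φ) t₀ = a := by rw [hev.deriv_eq, hψ.deriv]
  -- A positive second derivative makes `t₀` a local minimum too, so `φ` is locally constant.
  have hmin : IsLocalMin φ t₀ := isLocalMin_of_deriv_deriv_pos (by rw [hdd]; exact ha)
    hmax.deriv_eq_zero hφ.self_of_nhds.continuousAt
  have hconst : φ =ᶠ[𝓝 t₀] fun _ => φ t₀ := by
    filter_upwards [hmax, hmin] with t h1 h2 using le_antisymm h1 h2
  have hz : deriv (deriv φ) t₀ = 0 := by
    rw [hconst.deriv.deriv_eq]; simp
  linarith

/-- If `u + K/2 * (x p)^2` has a local maximum at `x`, its second derivative in direction `e` is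
nonpositive there. -/
lemma pure_second_deriv_le {n : ℕ} {u : EuclideanSpace ℝ (Fin n) → ℝ} {K : ℝ} {p : Fin n}
    {x : EuclideanSpace ℝ (Fin n)} (hu : ContDiffAt ℝ 2 u x)
    (hmax : IsLocalMax (fun y => u y + K / 2 * (y p) ^ 2) x) (e : EuclideanSpace ℝ (Fin n)) :
    iteratedFDeriv ℝ 2 u x ![e, e] + K * (e p) ^ 2 ≤ 0 := by
  have hline : ∀ t : ℝ, HasDerivAt (fun t : ℝ => x + t • e) e t := fun t => by
    simpa using ((hasDerivAt_id t).smul_const e).const_add x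
  have hcont : Tendsto (fun t : ℝ => x + t • e) (𝓝 0) (𝓝 x) := by
    simpa [ContinuousAt] using (hline 0).continuousAt
  have hcoord : ∀ t : ℝ, HasDerivAt (fun t : ℝ => x p + t * e p) (e p) t := fun t => by
    simpa using ((hasDerivAt_id t).mul_const (e p)).const_add (x p)
  have hdiff : ∀ᶠ y in 𝓝 x, DifferentiableAt ℝ u y :=
    (hu.eventually (by simp)).mono fun y hy => hy.differentiableAt (by simp)
  have hfd : DifferentiableAt ℝ (fderiv ℝ u) x :=
    (hu.fderiv_right (m := 1) (by norm_num)).differentiableAt (by simp)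
  refine second_deriv_nonpos_of_isLocalMax (t₀ := 0)
    (φ := fun t => u (x + t • e) + K / 2 * (x p + t * e p) ^ 2)
    (ψ := fun t => fderiv ℝ u (x + t • e) e + K * (x p + t * e p) * e p) ?_ ?_ ?_
  · filter_upwards [hcont.eventually hmax] with t ht
    simpa using ht
  · filter_upwards [hcont.eventually hdiff] with t ht
    have h1 := ht.hasFDerivAt.comp_hasDerivAt t (hline t)
    have h2 := ((hcoord t).pow 2).const_mul (K / 2)
    refine (h1.add h2).congr_deriv ?_
    simp only [Nat.cast_ofNat]
    ring
  · have hfd' : HasFDerivAt (fderiv ℝ u) (fderiv ℝ (fderiv ℝ u) x) (x + (0 : ℝ) • e) := by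
      simpa using hfd.hasFDerivAt
    have h0 : HasDerivAt (fun t : ℝ => fderiv ℝ u (x + t • e)) (fderiv ℝ (fderiv ℝ u) x e) 0 :=
      hfd'.comp_hasDerivAt (0 : ℝ) (hline 0)
    have h1 : HasDerivAt (fun t : ℝ => fderiv ℝ u (x + t • e) e)
        (fderiv ℝ (fderiv ℝ u) x e e) 0 := by
      simpa using h0.clm_apply (hasDerivAt_const (0 : ℝ) e)
    have h2 := ((hcoord 0).const_mul K).mul_const (e p)
    refine (h1.add h2).congr_deriv ?_
    rw [iteratedFDeriv_two_apply]
    simp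
    ring

lemma lap_add_le_zero {n : ℕ} {u : EuclideanSpace ℝ (Fin n) → ℝ} {K : ℝ} {p : Fin n}
    {x : EuclideanSpace ℝ (Fin n)} (hu : ContDiffAt ℝ 2 u x)
    (hmax : IsLocalMax (fun y => u y + K / 2 * (y p) ^ 2) x) : lap u x + K ≤ 0 := by
  have h := Finset.sum_nonpos fun (i : Fin n) (_ : i ∈ Finset.univ) =>
    pure_second_deriv_le hu hmax (EuclideanSpace.single i 1)
  rw [Finset.sum_add_distrib] at h
  have hK : ∑ i : Fin n, K * ((EuclideanSpace.single i (1 : ℝ)) p) ^ 2 = K := by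
    simp
  rw [hK] at h
  exact h

lemma lap_neg {n : ℕ} (u : EuclideanSpace ℝ (Fin n) → ℝ) (x : EuclideanSpace ℝ (Fin n)) :
    lap (-u) x = -lap u x := by
  simp [lap, iteratedFDeriv_neg]

/-- The one-sided estimate: a lower bound on the Laplacian bounds `u` from above. -/
lemma le_of_lap_lower_bound {n : ℕ} (p : Fin n) (d H : ℝ) (hH : 0 ≤ H)
    (Ω : Set (EuclideanSpace ℝ (Fin n))) (hΩo : IsOpen Ω) (hΩb : Bornology.IsBounded Ω)
    (hslab : ∀ x ∈ Ω, |x p| < d / 2)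
    (u : EuclideanSpace ℝ (Fin n) → ℝ)
    (hu_cont : ContinuousOn u (closure Ω)) (hu_smooth : ContDiffOn ℝ 2 u Ω)
    (hu_bdry : ∀ x ∈ frontier Ω, u x = 0)
    (hlap : ∀ x ∈ Ω, -H ≤ lap u x) :
    ∀ x ∈ Ω, u x ≤ d ^ 2 / 8 * H := by
  intro x hx
  have hcoord : Continuous fun y : EuclideanSpace ℝ (Fin n) => y p := by fun_prop
  have hclosed : closure Ω ⊆ {y | |y p| ≤ d / 2} :=
    closure_minimal (fun y hy => (hslab y hy).le) (isClosed_le hcoord.abs continuous_const)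
  have key : ∀ K, H < K → u x ≤ d ^ 2 / 8 * K := by
    intro K hK
    obtain ⟨z, hz, hzmax⟩ := hΩb.isCompact_closure.exists_isMaxOn ⟨x, subset_closure hx⟩
      (hu_cont.add (continuous_const.mul (hcoord.pow 2)).continuousOn :
        ContinuousOn (fun y => u y + K / 2 * (y p) ^ 2) (closure Ω))
    have hzΩ : z ∉ Ω := fun hzΩ => by
      have hnhds := hΩo.mem_nhds hzΩ
      have h1 := lap_add_le_zero (hu_smooth.contDiffAt hnhds)
        (hzmax.isLocalMax (mem_of_superset hnhds subset_closure))
      linarith [hlap z hzΩ]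
    have hzf : u z = 0 := hu_bdry z (by rw [hΩo.frontier_eq]; exact ⟨hz, hzΩ⟩)
    have hxz : u x + K / 2 * (x p) ^ 2 ≤ u z + K / 2 * (z p) ^ 2 := hzmax (subset_closure hx)
    have hzp : (z p) ^ 2 ≤ (d / 2) ^ 2 := sq_le_sq' (abs_le.mp (hclosed hz)).1
      (abs_le.mp (hclosed hz)).2
    have hK0 : 0 ≤ K / 2 := by linarith
    have h2 := mul_le_mul_of_nonneg_left hzp hK0
    have h3 := mul_nonneg hK0 (sq_nonneg (x p))
    rw [hzf] at hxz
    linarith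
  have hlim : Tendsto (fun K : ℝ => d ^ 2 / 8 * K) (𝓝[>] H) (𝓝 (d ^ 2 / 8 * H)) :=
    ((continuous_const.mul continuous_id).tendsto H).mono_left nhdsWithin_le_nhds
  exact ge_of_tendsto hlim (eventually_nhdsWithin_of_forall key)

theorem stmt0 {n : ℕ} (hn : 1 ≤ n) (d H : ℝ) (hd : 0 < d) (hH : 0 ≤ H)
    (Ω : Set (EuclideanSpace ℝ (Fin n))) (hΩo : IsOpen Ω) (hΩb : Bornology.IsBounded Ω)
    (hslab : ∀ x ∈ Ω, |x ⟨n - 1, by omega⟩| < d / 2)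
    (u : EuclideanSpace ℝ (Fin n) → ℝ)
    (hu_cont : ContinuousOn u (closure Ω)) (hu_smooth : ContDiffOn ℝ 2 u Ω)
    (hu_bdry : ∀ x ∈ frontier Ω, u x = 0)
    (hlap : ∀ x ∈ Ω, |lap u x| ≤ H) :
    ∀ x ∈ Ω, |u x| ≤ d ^ 2 / 8 * H := by
  intro x hx
  refine abs_le.mpr ⟨?_, le_of_lap_lower_bound _ d H hH Ω hΩo hΩb hslab u hu_cont hu_smooth hu_bdry
    (fun y hy => (abs_le.mp (hlap y hy)).1) x hx⟩
  have h := le_of_lap_lower_bound _ d H hH Ω hΩo hΩb hslab (-u) hu_cont.neg hu_smooth.neg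
    (fun y hy => by simp [hu_bdry y hy])
    (fun y hy => by rw [lap_neg]; linarith [(abs_le.mp (hlap y hy)).2]) x hx
  rw [Pi.neg_apply] at h
  linarith
end

section
/- Let n ≥ 1, 0 ≤ k ≤ n−1, d > 0, and let Ω ⊆ EuclideanSpace ℝ (Fin n) be a bounded open set contained in the cylinder {x : x₁² + ⋯ + x_{n−k}² < (d/2)²} (the sum of the squares of the first n−k coordinates is less than (d/2)²). Let u : EuclideanSpace ℝ (Fin n) → ℝ be continuous on the closure of Ω, twice continuously differentiable on Ω, and equal to 0 at every point of the frontier of Ω. Suppose H ≥ 0 and |Δu(x)| ≤ H for all x ∈ Ω. Then |u(x)| ≤ (d²/(8(n−k)))·H for all x ∈ Ω. -/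
/-!
The proof is the maximum principle with a quadratic barrier. Put `m = n - k`, let
`q x = x₁² + ⋯ + x_m²`, and take any `K > H`. Since `Δq = 2m`, the function
`w = u + K / (2m) * q` has `Δw = Δu + K > 0` on `Ω`, so `w` has no local maximum there
(`second_deriv_le_of_isLocalMax`). Hence `w` attains its maximum over the compact set `closure Ω` on
the frontier, where `u = 0` and `q ≤ (d / 2)²`; this gives `u ≤ w ≤ K d² / (8m)` on `Ω`
(`upper_bound_of_lap`). Let `K` decrease to `H`, and apply the same bound to `-u`.
-/

open MeasureTheory

open Filter Topology

/-- The second derivative test: if `f` has a local maximum at `0`, then `f'' 0 ≤ 0`. Were it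
positive, `0` would also be a local minimum, so `f` would be locally constant and `f'' 0 = 0`. -/
lemma deriv_deriv_nonpos_of_isLocalMax {f : ℝ → ℝ} (hf : IsLocalMax f 0)
    (hc : ContinuousAt f 0) : deriv (deriv f) 0 ≤ 0 := by
  by_contra! h
  have hmin := isLocalMin_of_deriv_deriv_pos h hf.deriv_eq_zero hc
  have hconst : f =ᶠ[𝓝 0] fun _ => f 0 := by
    filter_upwards [hf, hmin] with t h1 h2 using le_antisymm h1 h2
  rw [hconst.deriv.deriv_eq] at h
  simp at h

/-- If `u + φ` has a local maximum at `x` and `φ` is the quadratic `φ x + a t + b t²` along the line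
`x + t v`, then the second derivative of `u + φ` along this line is nonpositive. -/
lemma second_deriv_le_of_isLocalMax {E : Type*} [NormedAddCommGroup E] [NormedSpace ℝ E]
    {u φ : E → ℝ} {x v : E} {a b : ℝ} (hu : ContDiffAt ℝ 2 u x)
    (hφ : ∀ t : ℝ, φ (x + t • v) = φ x + a * t + b * t ^ 2)
    (hmax : IsLocalMax (fun y => u y + φ y) x) :
    iteratedFDeriv ℝ 2 u x ![v, v] + 2 * b ≤ 0 := by
  have hline : ∀ t : ℝ, HasDerivAt (fun t : ℝ => x + t • v) v t := fun t => by
    simpa using ((hasDerivAt_id t).smul_const v).const_add x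
  have hx0 : x + (0 : ℝ) • v = x := by simp
  have htend : Tendsto (fun t : ℝ => x + t • v) (𝓝 0) (𝓝 x) := by
    simpa [ContinuousAt] using (hline 0).continuousAt
  let f : ℝ → ℝ := fun t => u (x + t • v) + (φ x + a * t + b * t ^ 2)
  have hfmax : IsLocalMax f 0 := by
    filter_upwards [htend.eventually hmax] with t ht
    have h0 := hφ 0
    simp only [hx0] at h0
    simp only [f, hx0, ← hφ t]
    linarith
  have hev : ∀ᶠ y in 𝓝 x, DifferentiableAt ℝ u y := by
    filter_upwards [hu.eventually (by simp)] with y hy using hy.differentiableAt (by simp)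
  have hpoly : ∀ t : ℝ, HasDerivAt (fun t : ℝ => φ x + a * t + b * t ^ 2) (a + 2 * b * t) t := by
    intro t
    have h := (((hasDerivAt_id t).const_mul a).const_add (φ x)).add
      (((hasDerivAt_id t).pow 2).const_mul b)
    refine h.congr_deriv ?_
    simp
    ring
  have hd1 : deriv f =ᶠ[𝓝 0] fun t => fderiv ℝ u (x + t • v) v + (a + 2 * b * t) := by
    filter_upwards [htend.eventually hev] with t ht
    exact ((ht.hasFDerivAt.comp_hasDerivAt t (hline t)).add (hpoly t)).deriv
  have hfc : ContinuousAt f 0 := by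
    have h1 : DifferentiableAt ℝ u (x + (0 : ℝ) • v) := by
      rw [hx0]; exact hu.differentiableAt (by simp)
    exact ((h1.hasFDerivAt.comp_hasDerivAt 0 (hline 0)).add (hpoly 0)).continuousAt
  have hdu : DifferentiableAt ℝ (fderiv ℝ u) (x + (0 : ℝ) • v) := by
    rw [hx0]
    exact (hu.fderiv_right (m := 1) (by norm_num)).differentiableAt (by simp)
  have hd2 : HasDerivAt (fun t : ℝ => fderiv ℝ u (x + t • v) v + (a + 2 * b * t))
      (fderiv ℝ (fderiv ℝ u) x v v + 2 * b) 0 := by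
    have h1 := hdu.hasFDerivAt.comp_hasDerivAt (0 : ℝ) (hline 0)
    rw [hx0] at h1
    have h2 := h1.clm_apply (hasDerivAt_const (0 : ℝ) v)
    have h3 := ((hasDerivAt_id (0 : ℝ)).const_mul (2 * b)).const_add a
    exact (h2.add h3).congr_deriv (by simp)
  have := deriv_deriv_nonpos_of_isLocalMax hfmax hfc
  rw [hd1.deriv_eq, hd2.deriv] at this
  simpa [iteratedFDeriv_two_apply] using this

/-- The one-sided maximum principle bound with a strict lower bound `-K` for the Laplacian. The
map `c` selects the coordinates entering the barrier `q y = ∑ j, (y (c j))²`, and `Δq = 2m` because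
the fibres of `c` have total size `m`. -/
lemma upper_bound_of_lap {n m : ℕ} (hm : 0 < m) (c : Fin m → Fin n) {R K : ℝ} (hK : 0 < K)
    {Ω : Set (EuclideanSpace ℝ (Fin n))} (hΩo : IsOpen Ω) (hΩb : Bornology.IsBounded Ω)
    (hcyl : ∀ x ∈ Ω, ∑ j, (x (c j)) ^ 2 < R)
    {u : EuclideanSpace ℝ (Fin n) → ℝ}
    (hu_cont : ContinuousOn u (closure Ω)) (hu_smooth : ContDiffOn ℝ 2 u Ω)
    (hu_bdry : ∀ x ∈ frontier Ω, u x = 0)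
    (hlap : ∀ x ∈ Ω, -K < lap u x) :
    ∀ x ∈ Ω, u x ≤ K / (2 * m) * R := by
  intro x hx
  have hm' : (0 : ℝ) < m := by exact_mod_cast hm
  set C : ℝ := K / (2 * m) with hC
  have hCpos : 0 < C := by positivity
  let φ : EuclideanSpace ℝ (Fin n) → ℝ := fun y => C * ∑ j, (y (c j)) ^ 2
  have hφc : Continuous φ := by fun_prop
  obtain ⟨z, hz, hzmax⟩ := hΩb.isCompact_closure.exists_isMaxOn ⟨x, subset_closure hx⟩
    (hu_cont.add hφc.continuousOn)
  have hle : ∀ y ∈ closure Ω, ∑ j, (y (c j)) ^ 2 ≤ R := by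
    intro y hy
    have hcl : IsClosed {y : EuclideanSpace ℝ (Fin n) | ∑ j, (y (c j)) ^ 2 ≤ R} :=
      isClosed_le (by fun_prop) continuous_const
    exact closure_minimal (fun y hy => (hcyl y hy).le) hcl hy
  have hzΩ : z ∉ Ω := by
    intro hzΩ
    have hlm : IsLocalMax (fun y => u y + φ y) z := by
      filter_upwards [hΩo.mem_nhds hzΩ] with y hy using hzmax (subset_closure hy)
    have hi : ∀ i : Fin n, iteratedFDeriv ℝ 2 u z
        ![EuclideanSpace.single i 1, EuclideanSpace.single i 1]
        + 2 * (C * ∑ j, if c j = i then (1 : ℝ) else 0) ≤ 0 := by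
      intro i
      refine second_deriv_le_of_isLocalMax (φ := φ)
        (a := C * ∑ j, 2 * z (c j) * (if c j = i then (1 : ℝ) else 0))
        (hu_smooth.contDiffAt (hΩo.mem_nhds hzΩ)) ?_ hlm
      intro t
      simp only [φ]
      rw [mul_assoc C, mul_assoc C, ← mul_add, ← mul_add, Finset.sum_mul, Finset.sum_mul,
        ← Finset.sum_add_distrib, ← Finset.sum_add_distrib]
      congr 1
      refine Finset.sum_congr rfl fun j _ => ?_
      by_cases h : c j = i
      · simp [h]; ring
      · simp [h]
    have hsum := Finset.sum_nonpos fun i (_ : i ∈ Finset.univ) => hi i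
    rw [Finset.sum_add_distrib, ← Finset.mul_sum, ← Finset.mul_sum, Finset.sum_comm] at hsum
    simp only [Finset.sum_ite_eq, Finset.mem_univ, if_true, Finset.sum_const, Finset.card_univ,
      Fintype.card_fin, nsmul_eq_mul, mul_one] at hsum
    have hCm : 2 * (C * m) = K := by rw [hC]; field_simp
    have := hlap z hzΩ
    rw [hCm] at hsum
    unfold lap at this
    linarith
  have hzf : z ∈ frontier Ω := by
    rw [hΩo.frontier_eq]; exact ⟨hz, hzΩ⟩
  have h1 : u x + φ x ≤ u z + φ z := hzmax (subset_closure hx)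
  have h2 : 0 ≤ φ x := by positivity
  have h3 : φ z ≤ C * R := mul_le_mul_of_nonneg_left (hle z hz) hCpos.le
  rw [hu_bdry z hzf] at h1
  linarith

theorem stmt1 {n k : ℕ} (hn : 1 ≤ n) (hk : k ≤ n - 1) (d H : ℝ) (hd : 0 < d) (hH : 0 ≤ H)
    (Ω : Set (EuclideanSpace ℝ (Fin n))) (hΩo : IsOpen Ω) (hΩb : Bornology.IsBounded Ω)
    (hcyl : ∀ x ∈ Ω, ∑ i : Fin (n - k), (x (Fin.castLE (Nat.sub_le n k) i)) ^ 2 < (d / 2) ^ 2)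
    (u : EuclideanSpace ℝ (Fin n) → ℝ)
    (hu_cont : ContinuousOn u (closure Ω)) (hu_smooth : ContDiffOn ℝ 2 u Ω)
    (hu_bdry : ∀ x ∈ frontier Ω, u x = 0)
    (hlap : ∀ x ∈ Ω, |lap u x| ≤ H) :
    ∀ x ∈ Ω, |u x| ≤ d ^ 2 / (8 * ((n - k : ℕ) : ℝ)) * H := by
  intro x hx
  have hm : 0 < n - k := by omega
  have hm' : (0 : ℝ) < ((n - k : ℕ) : ℝ) := by exact_mod_cast hm
  have key : ∀ K, H < K → |u x| ≤ d ^ 2 / (8 * ((n - k : ℕ) : ℝ)) * K := by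
    intro K hHK
    have hK : 0 < K := hH.trans_lt hHK
    have e : K / (2 * ((n - k : ℕ) : ℝ)) * (d / 2) ^ 2 = d ^ 2 / (8 * ((n - k : ℕ) : ℝ)) * K := by
      field_simp
      norm_num
    rw [← e]
    refine abs_le'.2 ⟨?_, ?_⟩
    · refine upper_bound_of_lap hm _ hK hΩo hΩb hcyl hu_cont hu_smooth hu_bdry (fun y hy => ?_) x hx
      linarith [(abs_le.1 (hlap y hy)).1]
    · refine upper_bound_of_lap (u := -u) hm _ hK hΩo hΩb hcyl hu_cont.neg hu_smooth.neg
        (fun y hy => by simp [hu_bdry y hy]) (fun y hy => ?_) x hx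
      rw [lap_neg]
      linarith [(abs_le.1 (hlap y hy)).2]
  have hlim : Tendsto (fun K => d ^ 2 / (8 * ((n - k : ℕ) : ℝ)) * K) (𝓝[>] H)
      (𝓝 (d ^ 2 / (8 * ((n - k : ℕ) : ℝ)) * H)) :=
    (Continuous.tendsto (by fun_prop) H).mono_left nhdsWithin_le_nhds
  exact ge_of_tendsto hlim (eventually_mem_nhdsWithin.mono key)
end

section
/- Let p ≥ 1, c > 0, Λ > 0, K > 0, H ≥ 0 with c·Λ·K ≤ 1/2 and H ≤ Λ·K. Let a : ℕ → ℝ be a sequence with aₙ ≥ 0 for all n, a₀ ≤ c·H, and a_{n+1} ≤ c·Λ·K·aₙᵖ + c·H for all n (real powers). Then aₙ ≤ (H/(Λ·K))^{1/p} ≤ 1 for all n. -/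
/-!
With `t = H / (Λ K) ∈ [0, 1]`, the forcing term satisfies `c H = (c Λ K) t ≤ t / 2`. If
`aₙ ≤ t ^ (1/p)`, then `aₙ ^ p ≤ t`, so `aₙ₊₁ ≤ t / 2 + t / 2 = t`, and `t ≤ t ^ (1/p)` because
`t ≤ 1` and `1/p ≤ 1`. Hence the bound `t ^ (1/p)` propagates by induction.
-/

theorem stmt7 (p c Λ K H : ℝ) (hp : 1 ≤ p) (hc : 0 < c) (hΛ : 0 < Λ) (hK : 0 < K)
    (hH : 0 ≤ H) (hsmall1 : c * Λ * K ≤ 1 / 2) (hsmall2 : H ≤ Λ * K)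
    (a : ℕ → ℝ) (ha_nonneg : ∀ n, 0 ≤ a n) (ha0 : a 0 ≤ c * H)
    (harec : ∀ n, a (n + 1) ≤ c * Λ * K * a n ^ p + c * H) :
    ∀ n, a n ≤ (H / (Λ * K)) ^ ((1 : ℝ) / p) ∧ (H / (Λ * K)) ^ ((1 : ℝ) / p) ≤ 1 := by
  have hp0 : 0 < p := by linarith
  have hΛK : 0 < Λ * K := mul_pos hΛ hK
  obtain ⟨t, ht⟩ : ∃ t, t = H / (Λ * K) := ⟨_, rfl⟩
  rw [← ht]
  have ht0 : 0 ≤ t := ht ▸ div_nonneg hH hΛK.le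
  have ht1 : t ≤ 1 := ht ▸ (div_le_one hΛK).2 hsmall2
  have hcH : c * H ≤ t / 2 := by
    have hHt : H = t * (Λ * K) := by rw [ht]; field_simp
    calc c * H = c * Λ * K * t := by rw [hHt]; ring
      _ ≤ 1 / 2 * t := mul_le_mul_of_nonneg_right hsmall1 ht0
      _ = t / 2 := by ring
  have hroot : t ≤ t ^ ((1 : ℝ) / p) :=
    Real.self_le_rpow_of_le_one ht0 ht1 ((div_le_one hp0).2 hp)
  refine fun n => ⟨?_, Real.rpow_le_one ht0 ht1 (by positivity)⟩
  induction n with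
  | zero => linarith
  | succ n ih =>
    have hpow : a n ^ p ≤ t := by
      calc a n ^ p ≤ (t ^ ((1 : ℝ) / p)) ^ p :=
            Real.rpow_le_rpow (ha_nonneg n) ih hp0.le
        _ = t := by rw [← Real.rpow_mul ht0, one_div_mul_cancel hp0.ne', Real.rpow_one]
    have hstep : c * Λ * K * a n ^ p ≤ 1 / 2 * t :=
      mul_le_mul hsmall1 hpow (Real.rpow_nonneg (ha_nonneg n) p) (by norm_num)
    linarith [harec n]
end

section
/- Let 0 ≤ p < 1, A ≥ 0, B ≥ 0, and let a : ℕ → ℝ be a sequence with aₙ ≥ 0 for all n and a_{n+1} ≤ A·aₙᵖ + B for all n (real powers). Then aₙ ≤ max(a₀, max((2A)^{1/(1−p)}, 2B)) for all n. -/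
/-!
Write `M` for the claimed bound. Then `2 * A ≤ M ^ (1 - p)` and `2 * B ≤ M`, so `0 ≤ x ≤ M` gives
`A * x ^ p + B ≤ M ^ (1 - p) * M ^ p / 2 + M / 2 = M`: the interval `[0, M]` is preserved by the
recursion, and the bound follows by induction.
-/

theorem stmt8 (p A B : ℝ) (hp0 : 0 ≤ p) (hp1 : p < 1) (hA : 0 ≤ A) (hB : 0 ≤ B)
    (a : ℕ → ℝ) (ha_nonneg : ∀ n, 0 ≤ a n)
    (harec : ∀ n, a (n + 1) ≤ A * a n ^ p + B) :
    ∀ n, a n ≤ max (a 0) (max ((2 * A) ^ ((1 : ℝ) / (1 - p))) (2 * B)) := by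
  set M := max (a 0) (max ((2 * A) ^ ((1 : ℝ) / (1 - p))) (2 * B)) with hM
  have h0 : a 0 ≤ M := le_max_left _ _
  have h1 : (2 * A) ^ ((1 : ℝ) / (1 - p)) ≤ M := (le_max_left _ _).trans (le_max_right _ _)
  have h2 : 2 * B ≤ M := (le_max_right _ _).trans (le_max_right _ _)
  have hM0 : 0 ≤ M := (ha_nonneg 0).trans h0
  have hq : 0 < 1 - p := sub_pos.2 hp1
  have hA2 : 2 * A ≤ M ^ (1 - p) := by
    have h := Real.rpow_le_rpow (by positivity) h1 hq.le
    rwa [← Real.rpow_mul (by positivity), one_div_mul_cancel hq.ne', Real.rpow_one] at h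
  -- Also valid when `M = 0`, including `p = 0`, because the exponents sum to `1 ≠ 0`.
  have hmul : M ^ (1 - p) * M ^ p = M := by
    rw [← Real.rpow_add' hM0 (by simp), sub_add_cancel, Real.rpow_one]
  intro n
  induction n with
  | zero => exact h0
  | succ n ih =>
    have h3 : a n ^ p ≤ M ^ p := Real.rpow_le_rpow (ha_nonneg n) ih hp0
    have h4 : A * a n ^ p ≤ A * M ^ p := mul_le_mul_of_nonneg_left h3 hA
    have h5 : 2 * A * M ^ p ≤ M ^ (1 - p) * M ^ p :=
      mul_le_mul_of_nonneg_right hA2 (Real.rpow_nonneg hM0 p)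
    linarith [harec n]
end

section
/- Let n ≥ 1 be an integer, let 0 < p ≤ 1/2, and let ε be a real number with 0 < ε ≤ ((n+4)/(4n(n+2)))^{p/(1−p)} (real powers). Let w be the radial profile function. Then for every r ∈ [0,1], ε·(1−r²) ≤ (w(r))ᵖ. -/
/-!
With `t = 1 - r²` and `K = (n+4)/(4n(n+2))`, the bracket in the profile factors as
`t (n + 4 - n r²)/(n+4)`, which is at least `t²`; hence `w(r) ≥ ε K t²`. Since `0 ≤ t ≤ 1` and
`2p ≤ 1`, this gives `w(r)ᵖ ≥ εᵖ Kᵖ t`, and the bound on `ε` says exactly that `ε¹⁻ᵖ ≤ Kᵖ`.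
-/

noncomputable def radialProfile (n : ℕ) (ε : ℝ) (r : ℝ) : ℝ :=
  (ε * ((n : ℝ) + 4) / (4 * (n : ℝ) * ((n : ℝ) + 2))) *
    (((n : ℝ) / ((n : ℝ) + 4)) * r ^ 4 - (2 * ((n : ℝ) + 2) / ((n : ℝ) + 4)) * r ^ 2 + 1)

theorem stmt12 (n : ℕ) (hn : 1 ≤ n) (p : ℝ) (hp0 : 0 < p) (hp1 : p ≤ 1 / 2)
    (ε : ℝ) (hε0 : 0 < ε)
    (hε1 : ε ≤ ((((n : ℝ) + 4)) / (4 * (n : ℝ) * ((n : ℝ) + 2))) ^ (p / (1 - p))) :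
    ∀ r ∈ Set.Icc (0 : ℝ) 1, ε * (1 - r ^ 2) ≤ (radialProfile n ε r) ^ p := by
  rintro r ⟨hr0, hr1⟩
  have hn' : (0 : ℝ) < n := by exact_mod_cast hn
  have hw : radialProfile n ε r = ε * (((n : ℝ) + 4) / (4 * (n : ℝ) * ((n : ℝ) + 2))) *
      ((1 - r ^ 2) * (((n : ℝ) + 4 - n * r ^ 2) / (n + 4))) := by
    unfold radialProfile
    field_simp
    ring
  set K : ℝ := ((n : ℝ) + 4) / (4 * (n : ℝ) * ((n : ℝ) + 2)) with hK
  have hKpos : 0 < K := by positivity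
  set t : ℝ := 1 - r ^ 2 with ht
  have ht0 : 0 ≤ t := by nlinarith
  have ht1 : t ≤ 1 := by nlinarith
  have hlin : t ≤ ((n : ℝ) + 4 - n * r ^ 2) / (n + 4) := by
    rw [le_div_iff₀ (by positivity)]
    nlinarith [sq_nonneg r]
  have hwge : ε * K * (t * t) ≤ radialProfile n ε r := by
    rw [hw]
    gcongr
  have hεK : ε ^ (1 - p) ≤ K ^ p := by
    have h := Real.rpow_le_rpow hε0.le hε1 (by linarith : 0 ≤ 1 - p)
    rwa [← Real.rpow_mul hKpos.le, div_mul_cancel₀ _ (sub_pos.2 (by linarith : p < 1)).ne'] at h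
  have htp : t ≤ (t * t) ^ p := by
    have h := Real.rpow_le_rpow_of_exponent_ge_of_imp ht0 ht1 (by linarith : p + p ≤ 1)
      (fun _ h => absurd h (by linarith))
    rwa [Real.rpow_one, Real.rpow_add_of_nonneg ht0 hp0.le hp0.le,
      ← Real.mul_rpow ht0 ht0] at h
  calc ε * t = ε ^ p * ε ^ (1 - p) * t := by
        rw [← Real.rpow_add hε0, add_sub_cancel, Real.rpow_one]
    _ ≤ ε ^ p * K ^ p * (t * t) ^ p := by gcongr
    _ = (ε * K * (t * t)) ^ p := by
        rw [← Real.mul_rpow hε0.le hKpos.le, ← Real.mul_rpow (by positivity) (by positivity)]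
    _ ≤ radialProfile n ε r ^ p := Real.rpow_le_rpow (by positivity) hwge hp0.le
end
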